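/- arXiv:2206.05482 — 2 statements merged into one kernel-verified Lean document; each statement's English description precedes it below -/
import Mathlib

section
/- Let Â = A + εB be an n×n dual matrix possessing a dual core generalized inverse Ĝ, and let C be a core inverse of A. Then Ĝ = C − ε·C·B·C if and only if rank(A²) = rank(A) and the rank of the n×2n block matrix [A B] equals rank(A). -/
open Matrix

/-- The dual matrix `A + εB`, viewed as a matrix over the dual numbers `ℝ[ε]`. -/
def dm {n : ℕ} (A B : Matrix (Fin n) (Fin n) ℝ) :
    Matrix (Fin n) (Fin n) (DualNumber ℝ) :=
  fun i j => TrivSqZeroExt.inl (A i j) + TrivSqZeroExt.inr (B i j)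

/-- A dual matrix has dual index one iff its column space equals that of its square,
equivalently (as shown in the paper) there is a dual matrix `X` with `M² * X = M`. -/
def DualIndexOne {n : ℕ} (M : Matrix (Fin n) (Fin n) (DualNumber ℝ)) : Prop :=
  ∃ X : Matrix (Fin n) (Fin n) (DualNumber ℝ), M * M * X = M

/-- `G` is a group inverse of the real matrix `A`. -/
def IsGroupInv {n : ℕ} (A G : Matrix (Fin n) (Fin n) ℝ) : Prop :=
  A * G * A = A ∧ G * A * G = G ∧ A * G = G * A

/-- `X` is the Moore–Penrose inverse of the real matrix `A`. -/
def IsMoorePenrose {n : ℕ} (A X : Matrix (Fin n) (Fin n) ℝ) : Prop :=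
  A * X * A = A ∧ X * A * X = X ∧ (A * X)ᵀ = A * X ∧ (X * A)ᵀ = X * A

/-- `C` is a core inverse of the real matrix `A`. -/
def IsCoreInv {n : ℕ} (A C : Matrix (Fin n) (Fin n) ℝ) : Prop :=
  A * C * A = A ∧ A * (C * C) = C ∧ (A * C)ᵀ = A * C

/-- `G` is a dual group generalized inverse (DGGI) of the dual matrix `M`. -/
def IsDGGI {n : ℕ} (M G : Matrix (Fin n) (Fin n) (DualNumber ℝ)) : Prop :=
  M * G * M = M ∧ G * M * G = G ∧ M * G = G * M

/-- `X` is a dual Moore–Penrose generalized inverse (DMPGI) of the dual matrix `M`. -/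
def IsDMPGI {n : ℕ} (M X : Matrix (Fin n) (Fin n) (DualNumber ℝ)) : Prop :=
  M * X * M = M ∧ X * M * X = X ∧ (M * X)ᵀ = M * X ∧ (X * M)ᵀ = X * M

/-- `G` is a dual core generalized inverse (DCGI) of the dual matrix `M`. -/
def IsDCGI {n : ℕ} (M G : Matrix (Fin n) (Fin n) (DualNumber ℝ)) : Prop :=
  M * G * M = M ∧ M * (G * G) = G ∧ (M * G)ᵀ = M * G

/-!
In any `*`-ring, if `ĝ` is a core inverse of `â`, then `e = âĝ` is a self-adjoint idempotent. Over
the dual numbers, with `p` and `s` the standard and dual parts of `e`, this gives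
`s = ps + (ps)*`, so `s` vanishes as soon as `ps = 0` or `ps = s`. For `â = a + εb` and
`ĝ = c + εd`, both sides of the equivalence say that `s = 0`. Indeed the dual part of `âĝâ = â`
reads `sa + pb = b`, so `s = 0` gives `pb = b`, that is, the columns of `b` lie in the column
space of `a`; conversely `pb = b` gives `ps = s`. On the other hand `ps = a(d + cbc)`, so
`d = -cbc` gives `ps = 0`; conversely, if `s = 0` then `d + cbc` is fixed by `p`, on whose range
`a` is injective because `ca² = a`.
-/

section CoreInverse

variable {R : Type*}

/-- `c` is a core inverse of `a` in a ring with involution: the common generalization of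
`IsCoreInv` and `IsDCGI`, with `star` in place of the transpose. -/
structure IsCoreInverse [Mul R] [Star R] (a c : R) : Prop where
  mul_inv_mul : a * c * a = a
  mul_inv_sq : a * (c * c) = c
  isSelfAdjoint : IsSelfAdjoint (a * c)

theorem mul_mul_self_of_mul_inv_sq [Ring R] [IsDedekindFiniteMonoid R] {a c : R}
    (haca : a * c * a = a) (hacc : a * (c * c) = c) : c * a * a = a := by
  -- `c` inverts `a` from the right on `acR`; adding the complementary idempotent `1 - ac` turns
  -- this into a right inverse in `R`, to which Dedekind finiteness applies.
  have right_inv : (a * (a * c) + 1 - a * c) * (c + 1 - a * c) = 1 := by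
    linear_combination (norm := noncomm_ring) a * hacc - hacc - a * haca * c + haca * c
  have left_inv := mul_eq_one_comm.mp right_inv
  linear_combination (norm := noncomm_ring)
    left_inv * a - (c + 1 - a * c) * (a * haca - haca) + haca * a

namespace IsCoreInverse

section Semigroup

variable [Semigroup R]

theorem mul_inv_mul_inv [Star R] {a c : R} (h : IsCoreInverse a c) : a * c * c = c := by
  rw [mul_assoc, h.mul_inv_sq]

theorem isStarProjection_mul_inv [Star R] {a c : R} (h : IsCoreInverse a c) :
    IsStarProjection (a * c) where
  isIdempotentElem := by rw [IsIdempotentElem, ← mul_assoc, h.mul_inv_mul]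
  isSelfAdjoint := h.isSelfAdjoint

theorem mul_inv_unique [StarMul R] {a c d : R} (hc : IsCoreInverse a c)
    (hd : IsCoreInverse a d) : a * c = a * d :=
  calc a * c = a * d * (a * c) := by rw [← mul_assoc, hd.mul_inv_mul]
    _ = star (a * c * (a * d)) := by
      rw [star_mul, hc.isSelfAdjoint.star_eq, hd.isSelfAdjoint.star_eq]
    _ = a * d := by rw [← mul_assoc, hc.mul_inv_mul, hd.isSelfAdjoint.star_eq]

end Semigroup

section Ring

variable [Ring R] [IsDedekindFiniteMonoid R]

theorem inv_mul_eq_self_of_mul_inv_eq_self [Star R] {a c x : R} (h : IsCoreInverse a c)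
    (hx : a * c * x = x) : c * a * x = x :=
  calc c * a * x = c * a * a * (c * x) := by rw [mul_assoc (c * a), ← mul_assoc a c, hx]
    _ = x := by rw [mul_mul_self_of_mul_inv_sq h.mul_inv_mul h.mul_inv_sq, ← mul_assoc, hx]

theorem inv_mul_inv [Star R] {a c : R} (h : IsCoreInverse a c) : c * a * c = c :=
  h.inv_mul_eq_self_of_mul_inv_eq_self h.mul_inv_mul_inv

theorem unique [StarRing R] {a c d : R} (hc : IsCoreInverse a c) (hd : IsCoreInverse a d) :
    c = d := by
  have hac : a * c = a * d := hc.mul_inv_unique hd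
  calc c = d * a * c := (hd.inv_mul_eq_self_of_mul_inv_eq_self <| by
        rw [← hac, hc.mul_inv_mul_inv]).symm
    _ = d := by rw [mul_assoc, hac, ← mul_assoc, hd.inv_mul_inv]

end Ring

end IsCoreInverse

end CoreInverse

section DualNumber

open TrivSqZeroExt

variable {R : Type*}

/-- The involution `(a + εb)* = a* + εb*` on dual numbers, which for dual numbers over real
matrices is the transpose of dual matrices. -/
instance dualNumberStar [Star R] : Star (DualNumber R) where
  star x := (star x.fst, star x.snd)

theorem snd_eq_add_star_of_isStarProjection [NonUnitalSemiring R] [StarRing R] {e : DualNumber R}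
    (he : IsStarProjection e) : e.snd = e.fst * e.snd + star (e.fst * e.snd) := by
  have hfst : star e.fst = e.fst := congrArg fst he.isSelfAdjoint
  have hsnd : star e.snd = e.snd := congrArg snd he.isSelfAdjoint
  rw [star_mul, hfst, hsnd]
  exact (congrArg snd he.isIdempotentElem).symm

namespace IsCoreInverse

theorem dualNumber_fst [Semiring R] [Star R] {x y : DualNumber R} (h : IsCoreInverse x y) :
    IsCoreInverse x.fst y.fst where
  mul_inv_mul := congrArg fst h.mul_inv_mul
  mul_inv_sq := congrArg fst h.mul_inv_sq
  isSelfAdjoint := congrArg fst h.isSelfAdjoint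

variable [Ring R] [StarRing R] {x y : DualNumber R}

theorem fst_mul_snd_mul_inv (h : IsCoreInverse x y) :
    (x * y).fst * (x * y).snd = x.fst * (y.snd + y.fst * x.snd * y.fst) := by
  rw [fst_mul, DualNumber.snd_mul]
  linear_combination (norm := noncomm_ring) h.dualNumber_fst.mul_inv_mul * y.snd

theorem snd_mul_inv_eq_zero_iff_mul_inv_mul_snd (h : IsCoreInverse x y) :
    (x * y).snd = 0 ↔ x.fst * y.fst * x.snd = x.snd := by
  have hsnd : x.fst * y.fst * x.snd + (x * y).snd * x.fst = x.snd := congrArg snd h.mul_inv_mul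
  refine ⟨fun hs ↦ by rwa [hs, zero_mul, add_zero] at hsnd, fun hpb ↦ ?_⟩
  have hps : (x * y).fst * (x * y).snd = (x * y).snd := by
    rw [h.fst_mul_snd_mul_inv, DualNumber.snd_mul, mul_add, ← mul_assoc, ← mul_assoc, hpb]
  have hadd := snd_eq_add_star_of_isStarProjection h.isStarProjection_mul_inv
  rwa [hps, left_eq_add, star_eq_zero] at hadd

theorem snd_eq_neg_iff_snd_mul_inv_eq_zero [IsDedekindFiniteMonoid R] (h : IsCoreInverse x y) :
    y.snd = -(y.fst * x.snd * y.fst) ↔ (x * y).snd = 0 := by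
  rw [← add_eq_zero_iff_eq_neg]
  constructor
  · intro hd
    rw [snd_eq_add_star_of_isStarProjection h.isStarProjection_mul_inv, h.fst_mul_snd_mul_inv, hd,
      mul_zero, star_zero, add_zero]
  · intro hs
    have hsnd : x.fst * y.fst * y.snd + (x * y).snd * y.fst = y.snd :=
      congrArg snd h.mul_inv_mul_inv
    rw [hs, zero_mul, add_zero] at hsnd
    have hp : x.fst * y.fst * (y.snd + y.fst * x.snd * y.fst)
        = y.snd + y.fst * x.snd * y.fst := by
      rw [mul_add, hsnd, ← mul_assoc, ← mul_assoc, h.dualNumber_fst.mul_inv_mul_inv]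
    rw [← h.dualNumber_fst.inv_mul_eq_self_of_mul_inv_eq_self hp, mul_assoc,
      ← h.fst_mul_snd_mul_inv, hs, mul_zero, mul_zero]

end IsCoreInverse

end DualNumber

section Rank

variable {m n₁ n₂ R K : Type*} [Fintype n₁] [Fintype n₂]

theorem range_mulVecLin_fromCols [CommSemiring R] (A : Matrix m n₁ R) (B : Matrix m n₂ R) :
    (fromCols A B).mulVecLin.range = A.mulVecLin.range ⊔ B.mulVecLin.range := by
  have hcol : (fromCols A B).col = Sum.elim A.col B.col := by ext (j | j) i <;> rfl
  simp only [range_mulVecLin, hcol, Set.Sum.elim_range, Submodule.span_union]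

theorem rank_fromCols_eq_rank_left_iff [Field K] {A : Matrix m n₁ K} {B : Matrix m n₂ K} :
    (fromCols A B).rank = A.rank ↔ B.mulVecLin.range ≤ A.mulVecLin.range := by
  rw [rank, rank, range_mulVecLin_fromCols, ← sup_eq_left]
  exact ⟨fun h ↦ (Submodule.eq_of_le_of_finrank_eq le_sup_left h.symm).symm, fun h ↦ by rw [h]⟩

theorem range_mulVecLin_le_iff_mul_mul_eq [Fintype m] [CommSemiring R] {A : Matrix m n₁ R}
    {X : Matrix n₁ m R} (hX : A * X * A = A) {B : Matrix m n₂ R} :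
    B.mulVecLin.range ≤ A.mulVecLin.range ↔ A * X * B = B := by
  constructor
  · intro h
    refine ext_iff_mulVec.mpr fun v ↦ ?_
    obtain ⟨w, hw : A *ᵥ w = B *ᵥ v⟩ := h ⟨v, rfl⟩
    rw [← mulVec_mulVec, ← hw, mulVec_mulVec, hX]
  · intro h
    rw [← h, Matrix.mul_assoc, mulVecLin_mul]
    exact LinearMap.range_comp_le_range _ _

theorem IsCoreInverse.rank_mul_self [CommSemiring R] [StrongRankCondition R] [Star R]
    {A C : Matrix n₁ n₁ R} (h : IsCoreInverse A C) : (A * A).rank = A.rank := by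
  refine (rank_mul_le_left A A).antisymm ?_
  calc A.rank = (A * A * (C * C * A)).rank := by
        conv_lhs => rw [← h.mul_inv_mul, ← h.mul_inv_sq]
        simp only [mul_assoc]
    _ ≤ (A * A).rank := rank_mul_le_left (A * A) (C * C * A)

end Rank

section DualMatrix

open TrivSqZeroExt

variable {n : ℕ}

theorem dualNumberEquiv_dm (A B : Matrix (Fin n) (Fin n) ℝ) :
    dualNumberEquiv (dm A B) = inl A + inr B := by
  ext <;> simp [dm]

theorem dualNumberEquiv_transpose {m R : Type} [Fintype m] [DecidableEq m] [CommSemiring R]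
    [StarRing R] [TrivialStar R] (M : Matrix m m (DualNumber R)) :
    dualNumberEquiv Mᵀ = star (dualNumberEquiv M) :=
  TrivSqZeroExt.ext (conjTranspose_eq_transpose_of_trivial _).symm
    (conjTranspose_eq_transpose_of_trivial _).symm

theorem IsCoreInv.isCoreInverse {A C : Matrix (Fin n) (Fin n) ℝ} (h : IsCoreInv A C) :
    IsCoreInverse A C := ⟨h.1, h.2.1, h.2.2⟩

theorem IsDCGI.isCoreInverse {M G : Matrix (Fin n) (Fin n) (DualNumber ℝ)} (h : IsDCGI M G) :
    IsCoreInverse (dualNumberEquiv M) (dualNumberEquiv G) where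
  mul_inv_mul := by simp only [← map_mul, h.1]
  mul_inv_sq := by simp only [← map_mul, h.2.1]
  isSelfAdjoint := by
    rw [IsSelfAdjoint, ← map_mul, ← dualNumberEquiv_transpose, h.2.2]

end DualMatrix

theorem stmt16_general {n K : Type*} [Fintype n] [DecidableEq n] [Field K] [StarRing K]
    {A B C : Matrix n n K} {G : DualNumber (Matrix n n K)}
    (hG : IsCoreInverse (TrivSqZeroExt.inl A + TrivSqZeroExt.inr B) G) (hC : IsCoreInverse A C) :
    G = TrivSqZeroExt.inl C + TrivSqZeroExt.inr (-(C * B * C)) ↔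
      (A * A).rank = A.rank ∧ (fromCols A B).rank = A.rank := by
  have hfst_core : IsCoreInverse A G.fst := by simpa using hG.dualNumber_fst
  have hfst : G.fst = C := hfst_core.unique hC
  have hsnd : G.snd = -(C * B * C) ↔ A * C * B = B := by
    simpa [hfst] using hG.snd_eq_neg_iff_snd_mul_inv_eq_zero.trans
      hG.snd_mul_inv_eq_zero_iff_mul_inv_mul_snd
  calc G = TrivSqZeroExt.inl C + TrivSqZeroExt.inr (-(C * B * C))
    _ ↔ A * C * B = B := by simp [TrivSqZeroExt.ext_iff, hfst, hsnd]
    _ ↔ (fromCols A B).rank = A.rank := by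
      rw [rank_fromCols_eq_rank_left_iff, range_mulVecLin_le_iff_mul_mul_eq hC.mul_inv_mul]
    _ ↔ (A * A).rank = A.rank ∧ (fromCols A B).rank = A.rank :=
      (and_iff_right hC.rank_mul_self).symm

theorem stmt16 {n : ℕ} (A B C : Matrix (Fin n) (Fin n) ℝ)
    (G : Matrix (Fin n) (Fin n) (DualNumber ℝ))
    (hG : IsDCGI (dm A B) G) (hC : IsCoreInv A C) :
    G = dm C (-(C * B * C)) ↔
      (A * A).rank = A.rank ∧ (Matrix.fromCols A B).rank = A.rank := by
  rw [← dualNumberEquiv.injective.eq_iff, dualNumberEquiv_dm]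
  exact stmt16_general (dualNumberEquiv_dm A B ▸ hG.isCoreInverse) hC.isCoreInverse
end

section
/- Let Â = A + εB be an n×n dual matrix and let P be the Moore–Penrose inverse of A. Then the following are equivalent: (a) there exists a group inverse G of A such that G − ε·G·B·G is a dual group generalized inverse of Â; (b) rank(A²) = rank(A) and P − ε·P·B·P is a dual Moore–Penrose generalized inverse of Â. -/
open Matrix

/-!
If `X` is a reflexive inverse of `A`, then `X - εXBX` is automatically an outer inverse of `A + εB`,
and the two products of these dual matrices are `AX + ε(1 - AX)BX` and `XA + εXB(1 - XA)`. Each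
`ε`-part is fixed by the idempotent `AX` (respectively `XA`) on one side and killed by it on the
other. The remaining axioms say either that `AX = XA` and the two `ε`-parts agree, or that
everything is symmetric; in both cases what is fixed is also killed, so the `ε`-parts vanish. What
is left is `AXB = B = BXA`, which says that `B` is both a right and a left multiple of `A`, a
condition in which `X` no longer occurs. The two kinds of inverse therefore differ only in the
existence of the group inverse of `A`, which is the rank condition.
-/

section GroupInverse

/-- `g` is a group inverse of `a`: a reflexive inverse commuting with `a`. Stated for arbitrary
multiplications, it covers matrices over a field and over its dual numbers at once. -/
def IsGroupInverse {S : Type*} [Mul S] (a g : S) : Prop :=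
  a * g * a = a ∧ g * a * g = g ∧ a * g = g * a

variable {S : Type*} [Semigroup S] {a g x y : S}

theorem IsGroupInverse.mul_self_mul (h : IsGroupInverse a g) : a * a * g = a := by
  rw [mul_assoc, h.2.2, ← mul_assoc, h.1]

theorem isGroupInverse_mul_mul (hx : a * a * x = a) (hy : y * (a * a) = a) :
    IsGroupInverse a (y * a * x) := by
  have comm : y * a = a * x := by
    calc y * a = y * (a * a) * x := by rw [mul_assoc, hx]
      _ = a * x := by rw [hy]
  have right : a * (y * a * x) = a * x := by
    rw [comm, ← mul_assoc, ← mul_assoc, hx]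
  have left : y * a * x * a = y * a := by
    rw [mul_assoc y, ← comm, mul_assoc, mul_assoc, hy]
  refine ⟨?_, ?_, ?_⟩
  · rw [right, ← comm, mul_assoc, hy]
  · rw [left, mul_assoc, right, ← mul_assoc]
  · rw [right, left, comm]

end GroupInverse

section Rank

variable {l m n K : Type*} [Fintype m] [Fintype n] [Field K]

theorem exists_mul_right_eq_of_rank_mul_eq {A : Matrix l m K} {C : Matrix m n K}
    (h : (A * C).rank = A.rank) : ∃ X : Matrix n m K, A * C * X = A := by
  classical
  have range_le : LinearMap.range (A * C).mulVecLin ≤ LinearMap.range A.mulVecLin := by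
    rw [mulVecLin_mul]
    exact LinearMap.range_comp_le_range _ _
  have range_eq := Submodule.eq_of_le_of_finrank_eq range_le h
  have col_mem (j : m) : A.col j ∈ LinearMap.range (A * C).mulVecLin :=
    range_eq ▸ ⟨Pi.single j 1, mulVec_single_one A j⟩
  choose x hx using col_mem
  exact ⟨(of x)ᵀ, ext fun i j => congrFun (hx j) i⟩

theorem exists_mul_left_eq_of_rank_mul_eq [Fintype l] {A : Matrix m n K} {C : Matrix l m K}
    (h : (C * A).rank = A.rank) : ∃ Y : Matrix m l K, Y * (C * A) = A := by
  obtain ⟨Z, hZ⟩ : ∃ Z : Matrix l m K, Aᵀ * Cᵀ * Z = Aᵀ :=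
    exists_mul_right_eq_of_rank_mul_eq (by rw [← transpose_mul, rank_transpose, rank_transpose, h])
  exact ⟨Zᵀ, by simpa only [transpose_mul, transpose_transpose] using congrArg transpose hZ⟩

theorem exists_isGroupInverse_iff_rank_mul_self_eq {A : Matrix n n K} :
    (∃ G, IsGroupInverse A G) ↔ (A * A).rank = A.rank := by
  constructor
  · rintro ⟨G, hG⟩
    refine le_antisymm (rank_mul_le_left A A) ?_
    calc A.rank = (A * A * G).rank := by rw [hG.mul_self_mul]
      _ ≤ (A * A).rank := rank_mul_le_left _ _
  · intro h
    obtain ⟨X, hX⟩ := exists_mul_right_eq_of_rank_mul_eq h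
    obtain ⟨Y, hY⟩ := exists_mul_left_eq_of_rank_mul_eq h
    exact ⟨Y * A * X, isGroupInverse_mul_mul hX hY⟩

end Rank

section Defect

variable {m n R : Type*} [Fintype m] [Fintype n]

/-- `B` is both a right and a left multiple of `A`. Over a field this says that the column space
and the row space of `B` are contained in those of `A`. -/
def IsTwoSidedMultiple [NonUnitalNonAssocSemiring R] (A B : Matrix m n R) : Prop :=
  (∃ U : Matrix n n R, A * U = B) ∧ ∃ V : Matrix m m R, V * A = B

variable [NonUnitalRing R] {A B : Matrix m n R} {X : Matrix n m R}

theorem isTwoSidedMultiple_iff (hA : A * X * A = A) :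
    IsTwoSidedMultiple A B ↔ A * X * B = B ∧ B * X * A = B := by
  constructor
  · rintro ⟨⟨U, rfl⟩, V, hV⟩
    refine ⟨by rw [← Matrix.mul_assoc, hA], ?_⟩
    rw [← hV, Matrix.mul_assoc, Matrix.mul_assoc, ← Matrix.mul_assoc A, hA]
  · rintro ⟨hAB, hBA⟩
    exact ⟨⟨X * B, by rw [← Matrix.mul_assoc, hAB]⟩, B * X, hBA⟩

/-- The matrix `(1 - AX)BX`, which is the `ε`-part of `(A + εB)(X - εXBX)`; it measures how far
this product is from `AX`. -/
def leftDefect (A B : Matrix m n R) (X : Matrix n m R) : Matrix m m R :=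
  B * X - A * X * B * X

/-- The matrix `XB(1 - XA)`, which is the `ε`-part of `(X - εXBX)(A + εB)`; it measures how far
this product is from `XA`. -/
def rightDefect (A B : Matrix m n R) (X : Matrix n m R) : Matrix n n R :=
  X * B - X * B * X * A

theorem leftDefect_mul_mul (hX : X * A * X = X) :
    leftDefect A B X * (A * X) = leftDefect A B X := by
  have hX' : X * (A * X) = X := by rw [← Matrix.mul_assoc, hX]
  simp only [leftDefect, Matrix.sub_mul, Matrix.mul_assoc, hX']

theorem mul_mul_leftDefect (hA : A * X * A = A) : A * X * leftDefect A B X = 0 := by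
  simp only [leftDefect, Matrix.mul_sub, ← Matrix.mul_assoc, hA, sub_self]

theorem mul_mul_rightDefect (hX : X * A * X = X) :
    X * A * rightDefect A B X = rightDefect A B X := by
  simp only [rightDefect, Matrix.mul_sub, ← Matrix.mul_assoc, hX]

theorem rightDefect_mul (hX : X * A * X = X) : rightDefect A B X * X = 0 := by
  have hX' : X * (A * X) = X := by rw [← Matrix.mul_assoc, hX]
  simp only [rightDefect, Matrix.sub_mul, Matrix.mul_assoc, hX', sub_self]

theorem isTwoSidedMultiple_iff_defect (hA : A * X * A = A) :
    IsTwoSidedMultiple A B ↔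
      A * X * B + leftDefect A B X * A = B ∧ leftDefect A B X = 0 ∧ rightDefect A B X = 0 := by
  rw [isTwoSidedMultiple_iff hA]
  constructor
  · rintro ⟨hAB, hBA⟩
    have left : leftDefect A B X = 0 := by rw [leftDefect, hAB, sub_self]
    have right : rightDefect A B X = 0 := by
      rw [rightDefect, Matrix.mul_assoc X, Matrix.mul_assoc X, hBA, sub_self]
    exact ⟨by rw [left, Matrix.zero_mul, add_zero, hAB], left, right⟩
  · rintro ⟨inner, left, right⟩
    have hAB : A * X * B = B := by rwa [left, Matrix.zero_mul, add_zero] at inner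
    refine ⟨hAB, ?_⟩
    calc B * X * A = A * (X * B * X * A) := by
          conv_lhs => rw [← hAB]
          simp only [Matrix.mul_assoc]
      _ = A * (X * B) := by rw [← sub_eq_zero.mp right]
      _ = B := by rw [← Matrix.mul_assoc, hAB]

end Defect

section DefectEquations

variable {n R : Type*} [Fintype n]

theorem leftDefect_eq_rightDefect_iff [NonUnitalRing R] {A B X : Matrix n n R}
    (hA : A * X * A = A) (hX : X * A * X = X) (comm : A * X = X * A) :
    leftDefect A B X = rightDefect A B X ↔ leftDefect A B X = 0 ∧ rightDefect A B X = 0 := by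
  refine ⟨fun h => ?_, fun ⟨hL, hR⟩ => hL.trans hR.symm⟩
  have right : rightDefect A B X = 0 := by
    rw [← mul_mul_rightDefect hX, ← h, ← comm, mul_mul_leftDefect hA]
  exact ⟨h.trans right, right⟩

theorem mul_eq_zero_comm_of_isSymm [NonUnitalCommSemiring R] {P U : Matrix n n R}
    (hP : P.IsSymm) (hU : U.IsSymm) : P * U = 0 ↔ U * P = 0 := by
  rw [← transpose_eq_zero, transpose_mul, hP.eq, hU.eq]

variable {m : Type*} [Fintype m] [NonUnitalCommRing R] {A B : Matrix m n R} {X : Matrix n m R}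

theorem isSymm_leftDefect_iff (hA : A * X * A = A) (hX : X * A * X = X)
    (symm : (A * X).IsSymm) : (leftDefect A B X).IsSymm ↔ leftDefect A B X = 0 := by
  refine ⟨fun h => ?_, fun h => h ▸ isSymm_zero⟩
  rw [← leftDefect_mul_mul hX]
  exact (mul_eq_zero_comm_of_isSymm symm h).mp (mul_mul_leftDefect hA)

theorem isSymm_rightDefect_iff (hX : X * A * X = X) (symm : (X * A).IsSymm) :
    (rightDefect A B X).IsSymm ↔ rightDefect A B X = 0 := by
  refine ⟨fun h => ?_, fun h => h ▸ isSymm_zero⟩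
  rw [← mul_mul_rightDefect hX]
  refine (mul_eq_zero_comm_of_isSymm symm h).mpr ?_
  rw [← Matrix.mul_assoc, rightDefect_mul hX, Matrix.zero_mul]

end DefectEquations

section DualMatrix

variable {l m n R : Type*}

/-- The dual matrix `A + εB`, as a possibly rectangular matrix over the dual numbers of `R`. -/
def dualMatrix [AddMonoid R] (A B : Matrix m n R) : Matrix m n (DualNumber R) :=
  fun i j => TrivSqZeroExt.inl (A i j) + TrivSqZeroExt.inr (B i j)

theorem dualMatrix_inj [AddMonoid R] {A B C D : Matrix m n R} :
    dualMatrix A B = dualMatrix C D ↔ A = C ∧ B = D := by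
  simp only [← Matrix.ext_iff, dualMatrix, TrivSqZeroExt.ext_iff, TrivSqZeroExt.fst_add,
    TrivSqZeroExt.snd_add, TrivSqZeroExt.fst_inl, TrivSqZeroExt.fst_inr, TrivSqZeroExt.snd_inl,
    TrivSqZeroExt.snd_inr, add_zero, zero_add, forall_and]

theorem dualMatrix_mul [Semiring R] [Fintype m] (A B : Matrix l m R) (C D : Matrix m n R) :
    dualMatrix A B * dualMatrix C D = dualMatrix (A * C) (A * D + B * C) := by
  ext i j <;>
    simp [dualMatrix, mul_apply, TrivSqZeroExt.fst_sum, TrivSqZeroExt.snd_sum,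
      Finset.sum_add_distrib]

theorem isSymm_dualMatrix_iff [AddMonoid R] {A B : Matrix n n R} :
    (dualMatrix A B).IsSymm ↔ A.IsSymm ∧ B.IsSymm :=
  dualMatrix_inj (A := Aᵀ) (B := Bᵀ)

variable [Fintype m] [Fintype n]

/-- The dual matrix `X - εXBX`, the first-order expansion of `(A + εB)⁻¹` when `X = A⁻¹`. It is the
candidate generalized inverse of `A + εB` built from a generalized inverse `X` of `A`. -/
def firstOrderInverse [Ring R] (B : Matrix m n R) (X : Matrix n m R) :
    Matrix n m (DualNumber R) :=
  dualMatrix X (-(X * B * X))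

section Ring

variable [Ring R] {A B : Matrix m n R} {X : Matrix n m R}

theorem dualMatrix_mul_firstOrderInverse :
    dualMatrix A B * firstOrderInverse B X = dualMatrix (A * X) (leftDefect A B X) := by
  rw [firstOrderInverse, dualMatrix_mul, leftDefect, Matrix.mul_neg, neg_add_eq_sub]
  simp only [Matrix.mul_assoc]

theorem firstOrderInverse_mul_dualMatrix :
    firstOrderInverse B X * dualMatrix A B = dualMatrix (X * A) (rightDefect A B X) := by
  rw [firstOrderInverse, dualMatrix_mul, rightDefect, Matrix.neg_mul, sub_eq_add_neg]

theorem firstOrderInverse_mul_dualMatrix_mul_firstOrderInverse (hX : X * A * X = X) :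
    firstOrderInverse B X * dualMatrix A B * firstOrderInverse B X = firstOrderInverse B X := by
  rw [firstOrderInverse_mul_dualMatrix, firstOrderInverse, dualMatrix_mul, rightDefect_mul hX,
    add_zero, Matrix.mul_neg, ← Matrix.mul_assoc, ← Matrix.mul_assoc, hX]

theorem dualMatrix_mul_firstOrderInverse_mul_dualMatrix_iff (hA : A * X * A = A) :
    dualMatrix A B * firstOrderInverse B X * dualMatrix A B = dualMatrix A B ↔
      A * X * B + leftDefect A B X * A = B := by
  rw [dualMatrix_mul_firstOrderInverse, dualMatrix_mul, dualMatrix_inj, and_iff_right hA]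

end Ring

theorem isGroupInverse_firstOrderInverse_iff [Ring R] {A B G : Matrix n n R}
    (hG : IsGroupInverse A G) :
    IsGroupInverse (dualMatrix A B) (firstOrderInverse B G) ↔ IsTwoSidedMultiple A B := by
  obtain ⟨hA, hG, comm⟩ := hG
  rw [isTwoSidedMultiple_iff_defect hA, ← leftDefect_eq_rightDefect_iff hA hG comm,
    IsGroupInverse, dualMatrix_mul_firstOrderInverse_mul_dualMatrix_iff hA,
    and_iff_right (firstOrderInverse_mul_dualMatrix_mul_firstOrderInverse hG),
    dualMatrix_mul_firstOrderInverse, firstOrderInverse_mul_dualMatrix, dualMatrix_inj,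
    and_iff_right comm]

/-- `X` is a Moore–Penrose inverse of `A` with respect to the transpose. No conjugation is involved
and existence is not guaranteed over a general ring. -/
def IsMoorePenroseInverse [NonUnitalNonAssocSemiring R] (A : Matrix m n R) (X : Matrix n m R) :
    Prop :=
  A * X * A = A ∧ X * A * X = X ∧ (A * X).IsSymm ∧ (X * A).IsSymm

theorem isMoorePenroseInverse_firstOrderInverse_iff [CommRing R] {A B : Matrix m n R}
    {X : Matrix n m R} (hX : IsMoorePenroseInverse A X) :
    IsMoorePenroseInverse (dualMatrix A B) (firstOrderInverse B X) ↔ IsTwoSidedMultiple A B := by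
  obtain ⟨hA, hX, symm_left, symm_right⟩ := hX
  rw [isTwoSidedMultiple_iff_defect hA, ← isSymm_leftDefect_iff hA hX symm_left,
    ← isSymm_rightDefect_iff hX symm_right, IsMoorePenroseInverse,
    dualMatrix_mul_firstOrderInverse_mul_dualMatrix_iff hA,
    and_iff_right (firstOrderInverse_mul_dualMatrix_mul_firstOrderInverse hX),
    dualMatrix_mul_firstOrderInverse, firstOrderInverse_mul_dualMatrix, isSymm_dualMatrix_iff,
    isSymm_dualMatrix_iff, and_iff_right symm_left, and_iff_right symm_right]

end DualMatrix

theorem stmt18_general {n K : Type*} [Fintype n] [Field K] {A B P : Matrix n n K}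
    (hP : IsMoorePenroseInverse A P) :
    (∃ G, IsGroupInverse A G ∧ IsGroupInverse (dualMatrix A B) (firstOrderInverse B G)) ↔
      (A * A).rank = A.rank ∧
        IsMoorePenroseInverse (dualMatrix A B) (firstOrderInverse B P) := by
  rw [isMoorePenroseInverse_firstOrderInverse_iff hP,
    ← exists_isGroupInverse_iff_rank_mul_self_eq, ← exists_and_right]
  exact exists_congr fun G => and_congr_right isGroupInverse_firstOrderInverse_iff

theorem stmt18 {n : ℕ} (A B P : Matrix (Fin n) (Fin n) ℝ)
    (hP : IsMoorePenrose A P) :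
    (∃ G : Matrix (Fin n) (Fin n) ℝ, IsGroupInv A G ∧
        IsDGGI (dm A B) (dm G (-(G * B * G)))) ↔
      ((A * A).rank = A.rank ∧ IsDMPGI (dm A B) (dm P (-(P * B * P)))) :=
  stmt18_general hP
end
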